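/- Let p be a prime number. Then the set of odd primes q, with q ≠ p, such that both p and −p are quadratic non-residues modulo q (i.e. the Legendre symbols (p/q) and (−p/q) both equal −1) has positive natural density within the set of all prime numbers. -/

import Mathlib

open Filter Topology

section Part1
open MeasureTheory

noncomputable def kFun (y : ℝ) : ℝ := 2 * (1 - Real.cos y) / y ^ 2
noncomputable def phiFun (u : ℝ) : ℝ := max 0 (1 - |u|)

lemma kFun_nonneg (y : ℝ) : 0 ≤ kFun y := by
  unfold kFun
  have := Real.cos_le_one y
  have : 0 ≤ 1 - Real.cos y := by linarith
  positivity

lemma kFun_measurable : Measurable kFun := by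
  unfold kFun; fun_prop

lemma kFun_le (y : ℝ) : kFun y ≤ 6 * (1 + y ^ 2)⁻¹ := by
  unfold kFun
  rcases eq_or_ne y 0 with rfl | hy
  · simp
  have hy2 : 0 < y ^ 2 := by positivity
  rw [← div_eq_mul_inv, div_le_div_iff₀ hy2 (by positivity)]
  have h1 := Real.one_sub_sq_div_two_le_cos (x := y)
  have h2 := Real.neg_one_le_cos y
  nlinarith

lemma kFun_integrable : Integrable kFun := by
  refine (integrable_inv_one_add_sq.const_mul 6).mono' kFun_measurable.aestronglyMeasurable ?_
  refine Eventually.of_forall fun y => ?_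
  rw [Real.norm_of_nonneg (kFun_nonneg y)]
  exact kFun_le y

lemma kFun_integral_pos : 0 < ∫ y, kFun y := by
  rw [integral_pos_iff_support_of_nonneg kFun_nonneg kFun_integrable]
  refine lt_of_lt_of_le ?_ (measure_mono (s := Set.Ioo 0 1) ?_)
  · simp
  · intro y hy
    have : Real.cos y < 1 := by
      rw [← Real.cos_zero]
      exact Real.cos_lt_cos_of_nonneg_of_le_pi le_rfl (by linarith [Real.pi_gt_three, hy.2]) hy.1
    have h2 : 0 < kFun y := by
      unfold kFun
      have := hy.1
      have : 0 < 1 - Real.cos y := by linarith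
      positivity
    exact h2.ne'

lemma phiFun_continuous : Continuous phiFun := by unfold phiFun; fun_prop
lemma phiFun_nonneg (u : ℝ) : 0 ≤ phiFun u := le_max_left _ _
lemma phiFun_le (u : ℝ) : phiFun u ≤ 1 := by
  unfold phiFun; simp
lemma phiFun_zero {u : ℝ} (h : 1 ≤ |u|) : phiFun u = 0 := by
  unfold phiFun; simp [h]

lemma phiFun_compact : HasCompactSupport phiFun := by
  refine HasCompactSupport.intro (K := Set.Icc (-1) 1) isCompact_Icc fun u hu => phiFun_zero ?_
  by_contra! h
  exact hu ⟨(abs_lt.mp h).1.le, (abs_lt.mp h).2.le⟩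

lemma phiFun_integrable : Integrable phiFun :=
  phiFun_continuous.integrable_of_hasCompactSupport phiFun_compact

lemma half_integral {z : ℂ} (hz : z ≠ 0) :
    ∫ u in (0:ℝ)..1, ((1 - u : ℝ) : ℂ) * Complex.exp (z * u) =
      Complex.exp z / z ^ 2 - 1 / z - 1 / z ^ 2 := by
  have hd : ∀ u ∈ Set.uIcc (0:ℝ) 1, HasDerivAt
      (fun u : ℝ => (1 - (u:ℂ)) * Complex.exp (z * u) / z + Complex.exp (z * u) / z ^ 2)
      (((1 - u : ℝ) : ℂ) * Complex.exp (z * u)) u := by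
    intro u _
    have h1 : HasDerivAt (fun u : ℝ => (u : ℂ)) 1 u := Complex.ofRealCLM.hasDerivAt
    have h2 : HasDerivAt (fun u : ℝ => Complex.exp (z * u)) (Complex.exp (z * u) * (z * 1)) u :=
      (h1.const_mul z).cexp
    have h3 := ((((h1.const_sub 1).mul h2).div_const z).add (h2.div_const (z ^ 2)))
    convert! h3 using 1
    push_cast
    field_simp
    ring
  rw [intervalIntegral.integral_eq_sub_of_hasDerivAt hd]
  · simp
    ring
  · apply Continuous.intervalIntegrable
    fun_prop

lemma phi_fourier {y : ℝ} (hy : y ≠ 0) :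
    ∫ u : ℝ, (phiFun u : ℂ) * Complex.exp (Complex.I * y * u) = kFun y := by
  have hc : Continuous fun u : ℝ => (phiFun u : ℂ) * Complex.exp (Complex.I * y * u) := by
    have := phiFun_continuous
    fun_prop
  have h1 : ∫ u : ℝ, (phiFun u : ℂ) * Complex.exp (Complex.I * y * u) =
      ∫ u in (-1:ℝ)..1, (phiFun u : ℂ) * Complex.exp (Complex.I * y * u) := by
    symm
    apply intervalIntegral.integral_eq_integral_of_support_subset
    intro u hu
    by_contra h
    apply hu
    have : 1 ≤ |u| := by
      by_contra! h'
      exact h ⟨(abs_lt.mp h').1, (abs_lt.mp h').2.le⟩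
    simp [phiFun_zero this]
  have hI : Complex.I * (y:ℂ) ≠ 0 := by simp [hy]
  rw [h1, ← intervalIntegral.integral_add_adjacent_intervals (b := 0)
    (hc.intervalIntegrable _ _) (hc.intervalIntegrable _ _)]
  have h2 : ∫ u in (0:ℝ)..1, (phiFun u : ℂ) * Complex.exp (Complex.I * y * u) =
      ∫ u in (0:ℝ)..1, ((1 - u : ℝ) : ℂ) * Complex.exp (Complex.I * y * u) := by
    apply intervalIntegral.integral_congr
    intro u hu
    simp only [Set.uIcc_of_le zero_le_one, Set.mem_Icc] at hu
    have : phiFun u = 1 - u := by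
      unfold phiFun
      rw [abs_of_nonneg hu.1, max_eq_right]; linarith [hu.2]
    simp only [this]
  have h3 : ∫ u in (-1:ℝ)..0, (phiFun u : ℂ) * Complex.exp (Complex.I * y * u) =
      ∫ u in (0:ℝ)..1, ((1 - u : ℝ) : ℂ) * Complex.exp (-(Complex.I * y) * u) := by
    have := intervalIntegral.integral_comp_neg (a := 0) (b := 1)
      (fun u : ℝ => (phiFun u : ℂ) * Complex.exp (Complex.I * y * u))
    rw [neg_zero] at this
    rw [← this]
    apply intervalIntegral.integral_congr
    intro u hu
    simp only [Set.uIcc_of_le zero_le_one, Set.mem_Icc] at hu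
    have : phiFun (-u) = 1 - u := by
      unfold phiFun
      rw [abs_neg, abs_of_nonneg hu.1, max_eq_right]; linarith [hu.2]
    simp only [this]
    push_cast
    ring_nf
  rw [h2, h3, half_integral hI, half_integral (neg_ne_zero.mpr hI)]
  unfold kFun
  push_cast
  have hy' : (y:ℂ) ≠ 0 := by exact_mod_cast hy
  rw [Complex.cos]
  have e1 : Complex.I * (y:ℂ) = y * Complex.I := mul_comm _ _
  rw [e1, neg_mul_eq_neg_mul]
  field_simp
  simp only [Complex.I_sq]
  ring_nf
  try simp only [Complex.I_sq]
  try ring_nf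


lemma laplace_integrable {H : ℝ → ℝ} (Hm : Measurable H) {C : ℝ} (hC : ∀ v, |H v| ≤ C)
    (H0 : ∀ v ≤ 0, H v = 0) {ε : ℝ} (hε : 0 < ε) :
    Integrable fun v : ℝ => H v * Real.exp (-ε * v) := by
  have h1 : IntegrableOn (fun v : ℝ => H v * Real.exp (-ε * v)) (Set.Ioi 0) := by
    refine Integrable.mono' ((exp_neg_integrableOn_Ioi 0 hε).const_mul C) ?_ ?_
    · exact (Hm.mul (by fun_prop)).aestronglyMeasurable
    · refine Eventually.of_forall fun v => ?_
      rw [norm_mul, Real.norm_of_nonneg (Real.exp_nonneg _)]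
      exact mul_le_mul_of_nonneg_right (hC v) (Real.exp_nonneg _)
  refine (integrableOn_iff_integrable_of_support_subset ?_).mp h1
  intro v hv
  by_contra h
  apply hv
  simp only [Set.mem_Ioi, not_lt] at h
  simp [H0 v h]

lemma stepA {H : ℝ → ℝ} (Hm : Measurable H) {C : ℝ} (hC : ∀ v, |H v| ≤ C)
    (H0 : ∀ v ≤ 0, H v = 0) {g : ℂ → ℂ}
    (hG : ∀ s : ℂ, 0 < s.re → ∫ v : ℝ, (H v : ℂ) * Complex.exp (-s * v) = g s)
    {l : ℝ} (hl : 0 < l) (x : ℝ) {ε : ℝ} (hε : 0 < ε) :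
    ∫ v : ℝ, ((H v * Real.exp (-ε * v) : ℝ) : ℂ) * (kFun (l * (x - v)) : ℂ) =
    ∫ u : ℝ, (phiFun u : ℂ) * Complex.exp (Complex.I * (l * x : ℝ) * u) *
      g (ε + Complex.I * (l * u : ℝ)) := by
  have hint := laplace_integrable Hm hC H0 hε
  calc _ = ∫ v : ℝ, ∫ u : ℝ, ((H v * Real.exp (-ε * v) : ℝ) : ℂ) * (phiFun u : ℂ) *
          Complex.exp (Complex.I * (l * (x - v) : ℝ) * u) := by
        apply integral_congr_ae
        have : ∀ᵐ v : ℝ, v ≠ x := by simp [ae_iff, measure_singleton]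
        filter_upwards [this] with v hv
        have hne : l * (x - v) ≠ 0 := mul_ne_zero hl.ne' (sub_ne_zero.mpr hv.symm)
        rw [← phi_fourier hne, ← integral_const_mul]
        simp only [mul_assoc]
    _ = ∫ u : ℝ, ∫ v : ℝ, ((H v * Real.exp (-ε * v) : ℝ) : ℂ) * (phiFun u : ℂ) *
          Complex.exp (Complex.I * (l * (x - v) : ℝ) * u) := by
        apply integral_integral_swap
        have h1 : Integrable (fun z : ℝ × ℝ => ((H z.1 * Real.exp (-ε * z.1) : ℝ) : ℂ) *
          (phiFun z.2 : ℂ)) (volume.prod volume) :=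
          Integrable.mul_prod (f := fun v : ℝ => ((H v * Real.exp (-ε * v) : ℝ) : ℂ))
            (g := fun u : ℝ => (phiFun u : ℂ)) hint.ofReal phiFun_integrable.ofReal
        refine Integrable.mul_bdd (c := 1) h1 ?_ ?_
        · apply Continuous.aestronglyMeasurable
          fun_prop
        · refine Eventually.of_forall fun z => ?_
          rw [Complex.norm_exp]
          simp
    _ = _ := by
        congr 1
        ext u
        rw [← hG _ (by simpa using hε), ← integral_const_mul]
        congr 1
        ext v
        push_cast
        have : Complex.exp (Complex.I * (l * (x - v)) * u) * Complex.exp (-ε * v) =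
          Complex.exp (Complex.I * (l * x) * u) *
            Complex.exp (-(ε + Complex.I * (l * u)) * v) := by
          rw [← Complex.exp_add, ← Complex.exp_add]
          congr 1
          ring
        linear_combination (H v : ℂ) * phiFun u * this

lemma stepB {H : ℝ → ℝ} (Hm : Measurable H) {C : ℝ} (hC : ∀ v, |H v| ≤ C)
    (H0 : ∀ v ≤ 0, H v = 0) {g : ℂ → ℂ} (hg : ContinuousOn g {s | 0 ≤ s.re})
    (hG : ∀ s : ℂ, 0 < s.re → ∫ v : ℝ, (H v : ℂ) * Complex.exp (-s * v) = g s)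
    {l : ℝ} (hl : 0 < l) (x : ℝ) :
    ∫ v : ℝ, (H v : ℂ) * (kFun (l * (x - v)) : ℂ) =
    ∫ u : ℝ, (phiFun u : ℂ) * Complex.exp (Complex.I * (l * x : ℝ) * u) *
      g (Complex.I * (l * u : ℝ)) := by
  have hk : Integrable fun v : ℝ => kFun (l * (x - v)) :=
    (kFun_integrable.comp_mul_left' hl.ne').comp_sub_left x
  have hkm : Measurable fun v : ℝ => kFun (l * (x - v)) :=
    kFun_measurable.comp (by fun_prop)
  have t1 : Tendsto (fun ε : ℝ => ∫ v : ℝ, ((H v * Real.exp (-ε * v) : ℝ) : ℂ) *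
      (kFun (l * (x - v)) : ℂ)) (𝓝[>] 0)
      (𝓝 (∫ v : ℝ, (H v : ℂ) * (kFun (l * (x - v)) : ℂ))) := by
    refine tendsto_integral_filter_of_dominated_convergence
      (fun v => C * kFun (l * (x - v))) ?_ ?_ (hk.const_mul C) ?_
    · refine Eventually.of_forall fun ε => ?_
      refine Measurable.aestronglyMeasurable ?_
      exact (Complex.measurable_ofReal.comp (Hm.mul (by fun_prop))).mul
        (Complex.measurable_ofReal.comp hkm)
    · filter_upwards [self_mem_nhdsWithin] with ε hε
      have hε : 0 < ε := hε
      refine Eventually.of_forall fun v => ?_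
      rw [norm_mul, Complex.norm_real, Complex.norm_real, Real.norm_of_nonneg (kFun_nonneg _)]
      refine mul_le_mul_of_nonneg_right ?_ (kFun_nonneg _)
      rcases le_or_gt v 0 with hv | hv
      · rw [H0 v hv]; simpa using (abs_nonneg _).trans (hC v)
      · rw [norm_mul, Real.norm_of_nonneg (Real.exp_nonneg _)]
        have : Real.exp (-ε * v) ≤ 1 := Real.exp_le_one_iff.mpr (by nlinarith)
        calc _ ≤ ‖H v‖ * 1 := by gcongr
          _ ≤ C := by rw [mul_one]; exact hC v
    · refine Eventually.of_forall fun v => ?_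
      have : Continuous fun ε : ℝ => ((H v * Real.exp (-ε * v) : ℝ) : ℂ) *
        (kFun (l * (x - v)) : ℂ) := by fun_prop
      have := (this.tendsto 0).mono_left (nhdsWithin_le_nhds (s := Set.Ioi 0))
      simpa using this
  have hcont : ∀ ε : ℝ, 0 ≤ ε → Continuous fun u : ℝ => g (ε + Complex.I * (l * u : ℝ)) := by
    intro ε hε
    refine hg.comp_continuous (by fun_prop) fun u => ?_
    simpa using hε
  have hK : IsCompact ((fun z : ℝ × ℝ => (z.1 : ℂ) + Complex.I * (l * z.2 : ℝ)) ''
      (Set.Icc 0 1 ×ˢ Set.Icc (-1) 1)) :=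
    (isCompact_Icc.prod isCompact_Icc).image (by fun_prop)
  obtain ⟨M, hM⟩ := hK.exists_bound_of_continuousOn (f := g) (hg.mono (by
    rintro _ ⟨z, hz, rfl⟩
    simpa using hz.1.1))
  have t2 : Tendsto (fun ε : ℝ => ∫ u : ℝ, (phiFun u : ℂ) *
      Complex.exp (Complex.I * (l * x : ℝ) * u) * g (ε + Complex.I * (l * u : ℝ))) (𝓝[>] 0)
      (𝓝 (∫ u : ℝ, (phiFun u : ℂ) * Complex.exp (Complex.I * (l * x : ℝ) * u) *
      g (Complex.I * (l * u : ℝ)))) := by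
    refine tendsto_integral_filter_of_dominated_convergence
      (fun u => phiFun u * M) ?_ ?_ (phiFun_integrable.mul_const M) ?_
    · filter_upwards [self_mem_nhdsWithin] with ε hε
      have hc := hcont ε (le_of_lt hε)
      have := phiFun_continuous
      exact (Continuous.mul (by fun_prop) hc).aestronglyMeasurable
    · have : Set.Ioc (0:ℝ) 1 ∈ 𝓝[>] (0:ℝ) := Ioc_mem_nhdsGT one_pos
      filter_upwards [this] with ε hε
      refine Eventually.of_forall fun u => ?_
      rw [norm_mul, norm_mul, Complex.norm_real, Real.norm_of_nonneg (phiFun_nonneg _),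
        Complex.norm_exp]
      have : (Complex.I * ((l * x : ℝ) : ℂ) * (u:ℂ)).re = 0 := by simp
      rw [this, Real.exp_zero, mul_one]
      rcases le_or_gt 1 |u| with hu | hu
      · simp [phiFun_zero hu]
      · refine mul_le_mul_of_nonneg_left (hM _ ⟨(ε, u), ⟨⟨hε.1.le, hε.2⟩, ?_⟩, rfl⟩)
          (phiFun_nonneg _)
        exact ⟨(abs_lt.mp hu).1.le, (abs_lt.mp hu).2.le⟩
    · refine Eventually.of_forall fun u => ?_
      refine tendsto_const_nhds.mul ?_
      have h0 : (Complex.I * ((l * u : ℝ) : ℂ)) ∈ {s : ℂ | 0 ≤ s.re} := by simp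
      refine (hg _ h0).tendsto.comp (tendsto_nhdsWithin_iff.mpr ⟨?_, ?_⟩)
      · have : Continuous fun ε : ℝ => (ε:ℂ) + Complex.I * ((l * u : ℝ) : ℂ) := by fun_prop
        have := (this.tendsto 0).mono_left (nhdsWithin_le_nhds (s := Set.Ioi 0))
        simpa using this
      · filter_upwards [self_mem_nhdsWithin] with ε hε
        simpa using le_of_lt hε
  refine tendsto_nhds_unique (t1.congr' ?_) t2
  filter_upwards [self_mem_nhdsWithin] with ε hε
  exact stepA Hm hC H0 hG hl x hε

lemma stepC {H : ℝ → ℝ} (Hm : Measurable H) {C : ℝ} (hC : ∀ v, |H v| ≤ C)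
    (H0 : ∀ v ≤ 0, H v = 0) {g : ℂ → ℂ} (hg : ContinuousOn g {s | 0 ≤ s.re})
    (hG : ∀ s : ℂ, 0 < s.re → ∫ v : ℝ, (H v : ℂ) * Complex.exp (-s * v) = g s)
    {l : ℝ} (hl : 0 < l) :
    Tendsto (fun x : ℝ => ∫ v : ℝ, H v * kFun (l * (x - v))) atTop (𝓝 0) := by
  have h1 := Real.tendsto_integral_exp_smul_cocompact
    (fun u : ℝ => (phiFun u : ℂ) * g (Complex.I * (l * u : ℝ)))
  have h2 : Tendsto (fun x : ℝ => -(l * x / (2 * Real.pi))) atTop (cocompact ℝ) := by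
    have : Tendsto (fun x : ℝ => -(l * x / (2 * Real.pi))) atTop atBot := by
      apply tendsto_neg_atTop_atBot.comp
      exact (tendsto_id.const_mul_atTop hl).atTop_div_const (by positivity)
    exact this.mono_right atBot_le_cocompact
  have h3 := h1.comp h2
  have h4 : Tendsto (fun x : ℝ => ((∫ v : ℝ, H v * kFun (l * (x - v)) : ℝ) : ℂ)) atTop (𝓝 0) := by
    refine h3.congr fun x => ?_
    have := stepB Hm hC H0 hg hG hl x
    rw [← integral_complex_ofReal]
    push_cast at this ⊢
    rw [this]
    simp only [Function.comp]
    congr 1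
    ext u
    rw [Circle.smul_def, Real.fourierChar_apply, smul_eq_mul]
    have : (((2 * Real.pi * -(u * -(l * x / (2 * Real.pi))) : ℝ) : ℂ) * Complex.I) =
      Complex.I * (l * x) * u := by
      have : (2 * Real.pi * -(u * -(l * x / (2 * Real.pi))) : ℝ) = l * x * u := by
        have := Real.pi_ne_zero
        field_simp
      rw [this]; push_cast; ring
    rw [this]
    ring
  have := (Complex.continuous_re.tendsto 0).comp h4
  simpa [Function.comp_def] using this


lemma weighted_lower {f : ℝ → ℝ} (fm : Measurable f) {C : ℝ} (hC : ∀ v, |f v| ≤ C)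
    {R m : ℝ} (hR : 0 ≤ R) (hm : ∀ y, -R ≤ y → y ≤ R → m ≤ f y) :
    m * (∫ y in (-R)..R, kFun y) - C * ((∫ y, kFun y) - ∫ y in (-R)..R, kFun y) ≤
      ∫ y, f y * kFun y := by
  have hfk : Integrable fun y => f y * kFun y :=
    kFun_integrable.bdd_mul fm.aestronglyMeasurable (Eventually.of_forall hC)
  rw [intervalIntegral.integral_of_le (by linarith),
    ← integral_add_compl (measurableSet_Ioc (a := -R) (b := R)) kFun_integrable,
    ← integral_add_compl (measurableSet_Ioc (a := -R) (b := R)) hfk, add_sub_cancel_left,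
    sub_eq_add_neg, ← neg_mul, ← integral_const_mul, ← integral_const_mul]
  apply add_le_add
  · refine setIntegral_mono_on (kFun_integrable.const_mul m).integrableOn hfk.integrableOn
      measurableSet_Ioc fun y hy => ?_
    exact mul_le_mul_of_nonneg_right (hm y hy.1.le hy.2) (kFun_nonneg y)
  · refine integral_mono (kFun_integrable.const_mul (-C)).integrableOn hfk.integrableOn
      fun y => ?_
    exact mul_le_mul_of_nonneg_right (neg_le_of_abs_le (hC y)) (kFun_nonneg y)

lemma tauber {H : ℝ → ℝ} (Hm : Measurable H) {C : ℝ} (hC : ∀ v, |H v| ≤ C)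
    (H0 : ∀ v ≤ 0, H v = 0) {g : ℂ → ℂ} (hg : ContinuousOn g {s | 0 ≤ s.re})
    (hG : ∀ s : ℂ, 0 < s.re → ∫ v : ℝ, (H v : ℂ) * Complex.exp (-s * v) = g s)
    {c : ℝ} (hpos : ∀ v, 0 < v → 0 ≤ H v + c)
    (hslow : ∀ v w, 0 < v → v ≤ w → H v + c ≤ (H w + c) * Real.exp (w - v)) :
    Tendsto H atTop (𝓝 0) := by
  rw [Metric.tendsto_atTop']
  intro η hη
  obtain ⟨δ, hδ, hd1, hd2⟩ : ∃ δ > 0, c + η / 2 ≤ (c + η) * Real.exp (-(2 * δ)) ∧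
      (c - η) * Real.exp (2 * δ) ≤ c - η / 2 := by
    have c1 : Tendsto (fun δ : ℝ => (c + η) * Real.exp (-(2 * δ))) (𝓝[>] 0) (𝓝 (c + η)) := by
      have : Continuous fun δ : ℝ => (c + η) * Real.exp (-(2 * δ)) := by fun_prop
      simpa using (this.tendsto 0).mono_left (nhdsWithin_le_nhds (s := Set.Ioi 0))
    have c2 : Tendsto (fun δ : ℝ => (c - η) * Real.exp (2 * δ)) (𝓝[>] 0) (𝓝 (c - η)) := by
      have : Continuous fun δ : ℝ => (c - η) * Real.exp (2 * δ) := by fun_prop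
      simpa using (this.tendsto 0).mono_left (nhdsWithin_le_nhds (s := Set.Ioi 0))
    have e1 := c1.eventually_const_le (show c + η / 2 < c + η by linarith)
    have e2 := c2.eventually_le_const (show c - η < c - η / 2 by linarith)
    have e3 : ∀ᶠ δ : ℝ in 𝓝[>] 0, 0 < δ := self_mem_nhdsWithin
    obtain ⟨δ, h1, h2, h3⟩ := (e1.and (e2.and e3)).exists
    exact ⟨δ, h3, h1, h2⟩
  obtain ⟨R, hR, hκ⟩ : ∃ R > 0, 0 < (η / 2) * (∫ y in (-R)..R, kFun y) -
      C * ((∫ y, kFun y) - ∫ y in (-R)..R, kFun y) := by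
    have t : Tendsto (fun R : ℝ => ∫ y in (-R)..R, kFun y) atTop (𝓝 (∫ y, kFun y)) :=
      intervalIntegral_tendsto_integral kFun_integrable tendsto_neg_atTop_atBot tendsto_id
    have t2 := (t.const_mul (η / 2)).sub ((t.const_sub (∫ y, kFun y)).const_mul C)
    have e1 := t2.eventually_const_lt (u := 0) (by
      have := kFun_integral_pos
      rw [sub_self, mul_zero, sub_zero]; positivity)
    obtain ⟨R, h1, h2⟩ := (e1.and (eventually_gt_atTop 0)).exists
    exact ⟨R, h2, h1⟩
  set κ := (η / 2) * (∫ y in (-R)..R, kFun y) -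
      C * ((∫ y, kFun y) - ∫ y in (-R)..R, kFun y) with hκdef
  set l := R / δ with hldef
  have hl : 0 < l := by positivity
  have hRl : R / l = δ := by rw [hldef]; field_simp
  have hJ := stepC Hm hC H0 hg hG hl
  have hcv : ∀ x, ∫ v : ℝ, H v * kFun (l * (x - v)) = l⁻¹ * ∫ y, H (x - y / l) * kFun y := by
    intro x
    have h1 := integral_sub_left_eq_self (fun v : ℝ => H v * kFun (l * (x - v))) volume x
    rw [← h1]
    have h2 := Measure.integral_comp_mul_left (fun y : ℝ => H (x - y / l) * kFun y) l
    rw [abs_of_pos (inv_pos.mpr hl), smul_eq_mul] at h2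
    rw [← h2]
    congr 1
    ext v
    have : x - l * v / l = x - v := by field_simp
    rw [this]
    congr 2
    ring
  rw [Metric.tendsto_atTop'] at hJ
  obtain ⟨N, hN⟩ := hJ (l⁻¹ * κ) (by positivity)
  have hbd : ∀ x > N, |∫ y, H (x - y / l) * kFun y| < κ := by
    intro x hx
    have := hN x hx
    rw [hcv, Real.dist_eq, sub_zero, abs_mul, abs_of_pos (inv_pos.mpr hl)] at this
    exact lt_of_mul_lt_mul_left this (inv_pos.mpr hl).le
  have hyl : ∀ y, -R ≤ y → y ≤ R → -δ ≤ y / l ∧ y / l ≤ δ := by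
    intro y h1 h2
    rw [← hRl, ← neg_div]
    exact ⟨by gcongr, by gcongr⟩
  have hm : ∀ x, Measurable fun y : ℝ => H (x - y / l) := fun x => Hm.comp (by fun_prop)
  refine ⟨max N 0 + 2 * δ + 1, fun x0 hx0 => ?_⟩
  have hN0 := le_max_left N 0
  have hN1 := le_max_right N 0
  rw [Real.dist_eq, sub_zero, abs_lt]
  constructor
  · by_contra! hcon
    have hw := weighted_lower (f := fun y => - H ((x0 - δ) - y / l)) (hm _).neg
      (C := C) (fun v => by simpa using hC _) (R := R) (m := η / 2) hR.le (by
        intro y h1 h2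
        obtain ⟨h3, h4⟩ := hyl y h1 h2
        have hs := hslow ((x0 - δ) - y / l) x0 (by linarith) (by linarith)
        have hp := hpos x0 (by linarith)
        have he : Real.exp (x0 - ((x0 - δ) - y / l)) ≤ Real.exp (2 * δ) :=
          Real.exp_le_exp.mpr (by linarith)
        have h5 : (H x0 + c) * Real.exp (x0 - ((x0 - δ) - y / l)) ≤
          (H x0 + c) * Real.exp (2 * δ) := mul_le_mul_of_nonneg_left he hp
        have h6 : (H x0 + c) * Real.exp (2 * δ) ≤ (c - η) * Real.exp (2 * δ) :=
          mul_le_mul_of_nonneg_right (by linarith) (Real.exp_nonneg _)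
        linarith)
    have hb := hbd (x0 - δ) (by linarith)
    simp only [neg_mul, integral_neg] at hw
    have := neg_abs_le (∫ y, H ((x0 - δ) - y / l) * kFun y)
    linarith
  · by_contra! hcon
    have hw := weighted_lower (f := fun y => H ((x0 + δ) - y / l)) (hm _)
      (C := C) (fun v => hC _) (R := R) (m := η / 2) hR.le (by
        intro y h1 h2
        obtain ⟨h3, h4⟩ := hyl y h1 h2
        have hs := hslow x0 ((x0 + δ) - y / l) (by linarith) (by linarith)
        have hp := hpos ((x0 + δ) - y / l) (by linarith)
        have he : Real.exp (((x0 + δ) - y / l) - x0) ≤ Real.exp (2 * δ) :=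
          Real.exp_le_exp.mpr (by linarith)
        have h5 := mul_le_mul_of_nonneg_left he hp
        have h6 : (c + η) * Real.exp (-(2 * δ)) ≤ (H ((x0 + δ) - y / l) + c) := by
          rw [Real.exp_neg, ← div_eq_mul_inv, div_le_iff₀ (Real.exp_pos _)]
          linarith
        linarith)
    have hb := hbd (x0 + δ) (by linarith)
    have := le_abs_self (∫ y, H ((x0 + δ) - y / l) * kFun y)
    linarith

end Part1

section Part2
open MeasureTheory

open ArithmeticFunction ArithmeticFunction.vonMangoldt

set_option linter.unusedSectionVars false

section AP
variable {q : ℕ} [NeZero q] (a : ZMod q)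

noncomputable def psiAP (n : ℕ) : ℝ := ∑ k ∈ Finset.Icc 1 n, residueClass a k

lemma psiAP_mono : Monotone (psiAP a) := by
  intro m n h
  exact Finset.sum_le_sum_of_subset_of_nonneg (Finset.Icc_subset_Icc_right h)
    fun k _ _ => residueClass_nonneg a k

lemma psiAP_nonneg (n : ℕ) : 0 ≤ psiAP a n :=
  Finset.sum_nonneg fun k _ => residueClass_nonneg a k

lemma psiAP_le (x : ℝ) (hx : 0 ≤ x) : psiAP a ⌊x⌋₊ ≤ (Real.log 4 + 4) * x := by
  refine le_trans ?_ (Chebyshev.psi_le_const_mul_self hx)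
  exact Finset.sum_le_sum fun k _ => residueClass_le a k

noncomputable def HAP (v : ℝ) : ℝ :=
  if v ≤ 0 then 0 else psiAP a ⌊Real.exp v⌋₊ * Real.exp (-v) - (q.totient : ℝ)⁻¹

lemma HAP_zero {v : ℝ} (h : v ≤ 0) : HAP a v = 0 := if_pos h

lemma HAP_pos {v : ℝ} (h : 0 < v) :
    HAP a v = psiAP a ⌊Real.exp v⌋₊ * Real.exp (-v) - (q.totient : ℝ)⁻¹ := if_neg h.not_ge

lemma HAP_measurable : Measurable (HAP a) := by
  unfold HAP
  refine Measurable.ite measurableSet_Iic measurable_const ?_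
  refine Measurable.sub_const (Measurable.mul ?_ (by fun_prop)) _
  have : Measurable (psiAP a) := measurable_from_nat
  exact this.comp (Nat.measurable_floor.comp Real.measurable_exp)

lemma HAP_bound (v : ℝ) : |HAP a v| ≤ (Real.log 4 + 4) + (q.totient : ℝ)⁻¹ := by
  have h4 : 0 ≤ Real.log 4 := Real.log_nonneg (by norm_num)
  have hq : (0:ℝ) ≤ (q.totient : ℝ)⁻¹ := by positivity
  rcases le_or_gt v 0 with hv | hv
  · rw [HAP_zero a hv, abs_zero]; positivity
  · rw [HAP_pos a hv]
    have h1 := psiAP_le a (Real.exp v) (Real.exp_nonneg v)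
    have h2 := mul_le_mul_of_nonneg_right h1 (Real.exp_nonneg (-v))
    rw [mul_assoc, ← Real.exp_add, add_neg_cancel, Real.exp_zero, mul_one] at h2
    have h3 := mul_nonneg (psiAP_nonneg a ⌊Real.exp v⌋₊) (Real.exp_nonneg (-v))
    rw [abs_le]
    constructor <;> linarith

variable {a}

lemma HAP_laplace (ha : IsUnit a) (s : ℂ) (hs : 0 < s.re) :
    ∫ v : ℝ, (HAP a v : ℂ) * Complex.exp (-s * v) =
      (LFunctionResidueClassAux a (1 + s) - (q.totient : ℂ)⁻¹) / (1 + s) := by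
  have hs0 : s ≠ 0 := by rintro rfl; simp at hs
  have hs1 : 1 + s ≠ 0 := by
    intro h
    have := congrArg Complex.re h
    simp at this
    linarith
  have hre : 1 < (1 + s).re := by simpa using hs
  have hO : (fun n ↦ ∑ k ∈ Finset.Icc 1 n, residueClass a k) =O[atTop]
      fun n : ℕ ↦ (n : ℝ) ^ (1:ℝ) := by
    refine Asymptotics.IsBigO.of_bound (Real.log 4 + 4) (Eventually.of_forall fun n => ?_)
    have h1 := psiAP_le a n n.cast_nonneg
    have h2 := psiAP_nonneg a n
    rw [Nat.floor_natCast] at h1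
    unfold psiAP at h1 h2
    rw [Real.norm_of_nonneg h2, Real.rpow_one, Real.norm_of_nonneg n.cast_nonneg]
    exact h1
  have hL := LSeries_eq_mul_integral_of_nonneg (residueClass a) zero_le_one (s := 1 + s) hre hO
    (residueClass_nonneg a)
  have hA := eqOn_LFunctionResidueClassAux ha hre
  simp only at hA
  rw [hL] at hA
  have hI : ∫ t in Set.Ioi (1:ℝ), (∑ k ∈ Finset.Icc 1 ⌊t⌋₊, (residueClass a k : ℂ)) *
      (t:ℂ) ^ (-(1 + s + 1)) =
      ∫ v in Set.Ioi (0:ℝ), ((HAP a v : ℂ) * Complex.exp (-s * v) +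
        (q.totient : ℂ)⁻¹ * Complex.exp (-s * v)) := by
    have := integral_comp_exp_Ioi (fun t : ℝ =>
      (∑ k ∈ Finset.Icc 1 ⌊t⌋₊, (residueClass a k : ℂ)) * (t:ℂ) ^ (-(1 + s + 1))) 0
    rw [Real.exp_zero] at this
    rw [← this]
    refine setIntegral_congr_fun measurableSet_Ioi fun v hv => ?_
    simp only [HAP_pos a hv, psiAP]
    rw [Complex.cpow_def_of_ne_zero (by exact_mod_cast (Real.exp_pos v).ne'),
      ← Complex.ofReal_log (Real.exp_nonneg v), Real.log_exp, Complex.real_smul]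
    push_cast
    have e : Complex.exp v * Complex.exp (v * (-(1 + s + 1))) =
        Complex.exp (-v) * Complex.exp (-s * v) := by
      rw [← Complex.exp_add, ← Complex.exp_add]
      congr 1
      ring
    linear_combination (∑ k ∈ Finset.Icc 1 ⌊Real.exp v⌋₊, (residueClass a k : ℂ)) * e
  have i1 : Integrable fun v : ℝ => (HAP a v : ℂ) * Complex.exp (-s * v) := by
    have := laplace_integrable (HAP_measurable a) (HAP_bound a) (fun v => HAP_zero a) hs
    refine this.mono ?_ ?_
    · exact ((Complex.measurable_ofReal.comp (HAP_measurable a)).mul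
        (by fun_prop)).aestronglyMeasurable
    · refine Eventually.of_forall fun v => ?_
      rw [norm_mul, norm_mul, Complex.norm_real, Complex.norm_exp,
        Real.norm_of_nonneg (Real.exp_nonneg _)]
      simp
  have i2 : IntegrableOn (fun v : ℝ => (q.totient : ℂ)⁻¹ * Complex.exp (-s * v)) (Set.Ioi 0) :=
    (integrableOn_exp_mul_complex_Ioi (by simpa using hs) 0).const_mul _
  have i3 : ∫ v in Set.Ioi (0:ℝ), (HAP a v : ℂ) * Complex.exp (-s * v) =
      ∫ v : ℝ, (HAP a v : ℂ) * Complex.exp (-s * v) :=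
    setIntegral_eq_integral_of_forall_compl_eq_zero (fun v hv => by
      rw [HAP_zero a (by simpa using hv)]; simp)
  rw [integral_add i1.integrableOn i2, integral_const_mul,
    integral_exp_mul_complex_Ioi (by simpa using hs) 0, i3] at hI
  rw [hI] at hA
  rw [hA]
  simp only [Complex.ofReal_zero, mul_zero, Complex.exp_zero]
  have : (1 + s - 1) = s := by ring
  rw [this]
  field_simp
  ring

lemma HAP_tendsto (ha : IsUnit a) : Tendsto (HAP a) atTop (𝓝 0) := by
  refine tauber (HAP_measurable a) (HAP_bound a) (fun v => HAP_zero a)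
    (g := fun s => (LFunctionResidueClassAux a (1 + s) - (q.totient : ℂ)⁻¹) / (1 + s))
    ?_ (HAP_laplace ha) (c := (q.totient : ℝ)⁻¹) ?_ ?_
  · refine ContinuousOn.div (ContinuousOn.sub ?_ continuousOn_const) (by fun_prop) ?_
    · refine (continuousOn_LFunctionResidueClassAux a).comp (by fun_prop) fun s hs => ?_
      simpa using hs
    · intro s hs h
      have := congrArg Complex.re h
      have hs : 0 ≤ s.re := hs
      simp at this
      linarith
  · intro v hv
    rw [HAP_pos a hv, sub_add_cancel]
    exact mul_nonneg (psiAP_nonneg _ _) (Real.exp_nonneg _)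
  · intro v w hv hvw
    rw [HAP_pos a hv, HAP_pos a (hv.trans_le hvw), sub_add_cancel, sub_add_cancel, mul_assoc,
      ← Real.exp_add]
    have : -w + (w - v) = -v := by ring
    rw [this]
    refine mul_le_mul_of_nonneg_right (psiAP_mono a ?_) (Real.exp_nonneg _)
    exact Nat.floor_le_floor (Real.exp_le_exp.mpr hvw)

lemma psiAP_tendsto (ha : IsUnit a) :
    Tendsto (fun n : ℕ => psiAP a n / n) atTop (𝓝 (q.totient : ℝ)⁻¹) := by
  have h1 : Tendsto (fun n : ℕ => Real.log n) atTop atTop :=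
    Real.tendsto_log_atTop.comp tendsto_natCast_atTop_atTop
  have h2 := ((HAP_tendsto ha).comp h1).add_const ((q.totient : ℝ)⁻¹)
  rw [zero_add] at h2
  refine h2.congr' ?_
  filter_upwards [eventually_gt_atTop 1] with n hn
  have hn' : (1:ℝ) < n := by exact_mod_cast hn
  simp only [Function.comp]
  rw [HAP_pos a (Real.log_pos hn'), sub_add_cancel, Real.exp_neg, Real.exp_log (by linarith),
    Nat.floor_natCast, div_eq_mul_inv]

end AP


section AP2
variable {q : ℕ} [NeZero q] (a : ZMod q)

noncomputable def piAP (n : ℕ) : ℕ :=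
  ((Finset.Icc 1 n).filter fun k : ℕ => k.Prime ∧ (k : ZMod q) = a).card

lemma pi_sub_theta_tendsto : Tendsto (fun n : ℕ =>
    ((Nat.primeCounting n : ℝ) * Real.log n - Chebyshev.theta n) / n) atTop (𝓝 0) := by
  have h := Chebyshev.integral_theta_div_log_sq_isLittleO.tendsto_div_nhds_zero.comp
    (tendsto_natCast_atTop_atTop (R := ℝ))
  refine h.congr' ?_
  filter_upwards [eventually_ge_atTop 2] with n hn
  have hn' : (2:ℝ) ≤ n := by exact_mod_cast hn
  have e := Chebyshev.primeCounting_eq_theta_div_log_add_integral hn'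
  rw [Nat.floor_natCast] at e
  have hl : Real.log n ≠ 0 := (Real.log_pos (by linarith)).ne'
  simp only [Function.comp]
  rw [e]
  field_simp
  ring

lemma psi_sub_theta_tendsto : Tendsto (fun n : ℕ =>
    (Chebyshev.psi n - Chebyshev.theta n) / (n:ℝ)) atTop (𝓝 0) := by
  have h1 : (fun x : ℝ => Real.sqrt x) =o[atTop] fun x : ℝ => x := by
    rw [Asymptotics.isLittleO_iff_tendsto' (by
      filter_upwards [eventually_gt_atTop 0] with x hx h0
      exact absurd h0 hx.ne')]
    refine (Real.tendsto_sqrt_atTop.inv_tendsto_atTop).congr' ?_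
    filter_upwards with x
    rw [Pi.inv_apply, Real.sqrt_div_self]
  exact (Chebyshev.isBigO_psi_sub_theta_sqrt.trans_isLittleO h1).tendsto_div_nhds_zero.comp
    (tendsto_natCast_atTop_atTop (R := ℝ))

lemma piAP_sub_psiAP (n : ℕ) : |(piAP a n : ℝ) * Real.log n - psiAP a n| ≤
    ((Nat.primeCounting n : ℝ) * Real.log n - Chebyshev.theta n) +
      (Chebyshev.psi n - Chebyshev.theta n) := by
  have e1 : (Nat.primeCounting n : ℝ) * Real.log n - Chebyshev.theta n =
      ∑ k ∈ Finset.Icc 1 n, if k.Prime then Real.log n - Real.log k else 0 := by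
    rw [← Finset.sum_filter, Finset.sum_sub_distrib, Finset.sum_const, nsmul_eq_mul]
    congr 2
    · rw [← Nat.primesLE_card_eq_primeCounting]
      congr 2
      ext k
      simp only [Nat.mem_primesLE, Finset.mem_filter, Finset.mem_Icc]
      constructor
      · rintro ⟨h1, h2⟩; exact ⟨⟨h2.one_lt.le, h1⟩, h2⟩
      · rintro ⟨h1, h2⟩; exact ⟨h1.2, h2⟩
    · rw [Chebyshev.theta, Nat.floor_natCast]
      rfl
  have e2 : Chebyshev.psi n - Chebyshev.theta n =
      ∑ k ∈ Finset.Icc 1 n, if k.Prime then 0 else ArithmeticFunction.vonMangoldt k := by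
    rw [Chebyshev.psi_sub_theta_eq_sum_not_prime, Nat.floor_natCast, Finset.sum_filter]
    refine Finset.sum_congr rfl fun k _ => ?_
    by_cases h : k.Prime <;> simp [h]
  have e3 : (piAP a n : ℝ) * Real.log n - psiAP a n =
      ∑ k ∈ Finset.Icc 1 n, ((if k.Prime ∧ (k : ZMod q) = a then Real.log n else 0) -
        residueClass a k) := by
    rw [Finset.sum_sub_distrib, ← Finset.sum_filter, Finset.sum_const, nsmul_eq_mul]
    rfl
  rw [e1, e2, e3, ← Finset.sum_add_distrib]
  refine (Finset.abs_sum_le_sum_abs _ _).trans (Finset.sum_le_sum fun k hk => ?_)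
  rw [Finset.mem_Icc] at hk
  have hlog : Real.log k ≤ Real.log n :=
    Real.log_le_log (by exact_mod_cast hk.1) (by exact_mod_cast hk.2)
  by_cases hp : k.Prime
  · by_cases ha : (k : ZMod q) = a
    · simp only [hp, ha, residueClass, Set.indicator_apply, Set.mem_ofPred_eq, and_self, if_true,
        vonMangoldt_apply_prime hp, add_zero]
      rw [abs_of_nonneg (by linarith)]
    · simp [hp, ha, residueClass, hlog]
  · simp only [hp, false_and, if_false, zero_sub, abs_neg, zero_add]
    rw [abs_of_nonneg (residueClass_nonneg a k)]
    exact residueClass_le a k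

variable {a}

lemma piAP_tendsto (ha : IsUnit a) :
    Tendsto (fun n : ℕ => (piAP a n : ℝ) * Real.log n / n) atTop (𝓝 (q.totient : ℝ)⁻¹) := by
  have h1 : Tendsto (fun n : ℕ => ((piAP a n : ℝ) * Real.log n - psiAP a n) / n) atTop (𝓝 0) := by
    have h2 := pi_sub_theta_tendsto.add psi_sub_theta_tendsto
    rw [add_zero] at h2
    refine squeeze_zero_norm (fun n => ?_) h2
    rw [norm_div, Real.norm_of_nonneg (n.cast_nonneg : (0:ℝ) ≤ n), ← add_div]
    exact div_le_div_of_nonneg_right (piAP_sub_psiAP a n) n.cast_nonneg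
  have h2 := h1.add (psiAP_tendsto ha)
  rw [zero_add] at h2
  refine h2.congr fun n => ?_
  rw [← add_div, sub_add_cancel]

end AP2

lemma primes_tendsto :
    Tendsto (fun n : ℕ => (Nat.primeCounting n : ℝ) * Real.log n / n) atTop (𝓝 1) := by
  have h := piAP_tendsto (q := 1) (a := 0) (isUnit_of_subsingleton _)
  simp only [Nat.totient_one, Nat.cast_one, inv_one] at h
  refine h.congr fun n => ?_
  congr 3
  rw [← Nat.primesLE_card_eq_primeCounting]
  unfold piAP
  congr 1
  ext k
  simp only [Nat.mem_primesLE, Finset.mem_filter, Finset.mem_Icc]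
  constructor
  · rintro ⟨h1, h2⟩; exact ⟨h1.2, h2.1⟩
  · rintro ⟨h1, h2⟩; exact ⟨⟨h2.one_lt.le, h1⟩, h2, Subsingleton.elim _ _⟩

/-- Natural density of the primes whose residue lies in a set of invertible classes. -/
lemma density_classes {q : ℕ} [NeZero q] (T : Finset (ZMod q)) (hT : ∀ a ∈ T, IsUnit a) :
    Tendsto (fun n : ℕ =>
      (((Finset.Icc 1 n).filter fun k : ℕ => k.Prime ∧ (k : ZMod q) ∈ T).card : ℝ) /
        (Nat.primeCounting n : ℝ)) atTop (𝓝 (T.card * (q.totient : ℝ)⁻¹)) := by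
  have h1 : Tendsto (fun n : ℕ => ∑ a ∈ T, (piAP a n : ℝ) * Real.log n / n) atTop
      (𝓝 (∑ a ∈ T, (q.totient : ℝ)⁻¹)) := tendsto_finsetSum _ fun a ha => piAP_tendsto (hT a ha)
  rw [Finset.sum_const, nsmul_eq_mul] at h1
  have h2 := h1.div primes_tendsto one_ne_zero
  rw [div_one] at h2
  refine h2.congr' ?_
  filter_upwards [eventually_ge_atTop 2] with n hn
  have hn' : (2:ℝ) ≤ n := by exact_mod_cast hn
  have hl : Real.log n ≠ 0 := (Real.log_pos (by linarith)).ne'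
  have hn0 : (n:ℝ) ≠ 0 := by linarith
  have e : (((Finset.Icc 1 n).filter fun k : ℕ => k.Prime ∧ (k : ZMod q) ∈ T).card : ℝ) =
      ∑ a ∈ T, (piAP a n : ℝ) := by
    rw [Finset.card_eq_sum_card_fiberwise (f := fun k : ℕ => (k : ZMod q)) (t := T)
      (fun k hk => by
        have := (Finset.mem_filter.mp hk).2.2
        exact this)]
    push_cast
    refine Finset.sum_congr rfl fun a ha => ?_
    unfold piAP
    rw [Finset.filter_filter]
    congr 2
    ext k
    simp only [Finset.mem_filter]
    constructor
    · rintro ⟨h1, ⟨h2, _⟩, h3⟩; exact ⟨h1, h2, h3⟩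
    · rintro ⟨h1, h2, h3⟩; exact ⟨h1, ⟨h2, h3 ▸ ha⟩, h3⟩
  rw [e, Pi.div_apply, ← Finset.sum_div, ← Finset.sum_mul]
  field_simp

end Part2
lemma jac_iff (p q : ℕ) (hp : p.Prime) (hq : q.Prime) [NeZero (4*p)] : 
   (q ≠ 2 ∧ q ≠ p ∧ @legendreSym q ⟨hq⟩ (p : ℤ) = -1 ∧ @legendreSym q ⟨hq⟩ (-(p : ℤ)) = -1) ↔
   (IsUnit (q : ZMod (4*p)) ∧ jacobiSym p ((q : ZMod (4*p)).val) = -1 ∧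
     jacobiSym (-p) ((q : ZMod (4*p)).val) = -1) := by
  haveI : Fact q.Prime := ⟨hq⟩
  have hu : IsUnit (q : ZMod (4*p)) ↔ q ≠ 2 ∧ q ≠ p := by
    rw [ZMod.isUnit_iff_coprime, Nat.coprime_mul_iff_right, Nat.coprime_primes hq hp,
      show 4 = 2^2 by norm_num, Nat.coprime_pow_right_iff (by norm_num),
      Nat.coprime_primes hq Nat.prime_two]
  rw [hu, and_assoc]
  refine and_congr_right fun h2 => and_congr_right fun _ => ?_
  have ho : Odd q := hq.odd_of_ne_two h2
  rw [ZMod.val_natCast, jacobiSym.legendreSym.to_jacobiSym, jacobiSym.legendreSym.to_jacobiSym,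
    jacobiSym.mod_right (p:ℤ) ho, jacobiSym.mod_right (-(p:ℤ)) ho]
  simp

lemma exists_class (p : ℕ) (hp : p.Prime) [NeZero (4*p)] : ∃ a : ZMod (4*p),
   (IsUnit a ∧ jacobiSym p (a.val) = -1 ∧ jacobiSym (-p) (a.val) = -1) := by
  obtain ⟨b, hb1, hbc, hb3⟩ : ∃ b : ℕ, b % 4 = 1 ∧ b.Coprime p ∧ jacobiSym p b = -1 := by
    rcases hp.eq_two_or_odd' with rfl | ho
    · exact ⟨5, by norm_num, by norm_num, by norm_num⟩
    · haveI : Fact p.Prime := ⟨hp⟩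
      obtain ⟨u, hu⟩ := FiniteField.exists_nonsquare (F := ZMod p) (by
        rw [ZMod.ringChar_zmod_n]; rintro rfl; exact absurd ho (by decide))
      have hc : Nat.Coprime 4 p := by
        rw [show 4 = 2^2 by norm_num]
        exact Nat.Coprime.pow_left _ (Nat.coprime_two_left.mpr ho)
      obtain ⟨b, h1, h2⟩ := Nat.chineseRemainder hc 1 u.val
      have hbu : (b : ZMod p) = u := by
        rw [(ZMod.natCast_eq_natCast_iff _ _ _).mpr h2, ZMod.natCast_zmod_val]
      have hb4 : b % 4 = 1 := h1
      refine ⟨b, hb4, ?_, ?_⟩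
      · rw [← ZMod.isUnit_iff_coprime, hbu, isUnit_iff_ne_zero]
        rintro rfl
        exact hu IsSquare.zero
      · rw [jacobiSym.quadratic_reciprocity_one_mod_four' ho hb4, ← jacobiSym.legendreSym.to_jacobiSym,
          legendreSym.eq_neg_one_iff]
        push_cast
        rwa [hbu]
  have hbo : Odd b := by rw [Nat.odd_iff]; omega
  have hneg : jacobiSym (-p) b = -1 := by
    rw [jacobiSym.neg _ hbo, ZMod.χ₄_nat_one_mod_four hb1, hb3, one_mul]
  refine ⟨(b : ZMod (4*p)), ?_, ?_, ?_⟩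
  · rw [ZMod.isUnit_iff_coprime, Nat.coprime_mul_iff_right]
    refine ⟨?_, hbc⟩
    rw [show 4 = 2^2 by norm_num]
    exact Nat.Coprime.pow_right _ (Nat.coprime_two_right.mpr hbo)
  · rw [jacobiSym.mod_right _ hbo] at hb3
    rw [ZMod.val_natCast]
    simpa using hb3
  · rw [jacobiSym.mod_right _ hbo] at hneg
    rw [ZMod.val_natCast]
    simpa using hneg

theorem stmt17 (p : ℕ) (hp : p.Prime) :
    ∃ δ : ℝ, 0 < δ ∧
      Tendsto (fun x : ℕ =>
        (Nat.card {q : ℕ // (∃ hq : q.Prime, q ≠ 2 ∧ q ≠ p ∧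
            @legendreSym q ⟨hq⟩ (p : ℤ) = -1 ∧ @legendreSym q ⟨hq⟩ (-(p : ℤ)) = -1) ∧
            q ≤ x} : ℝ) /
          (Nat.card {q : ℕ // q.Prime ∧ q ≤ x} : ℝ)) atTop (𝓝 δ) := by
  classical
  have h4p : 4 * p ≠ 0 := by have := hp.pos; omega
  haveI : NeZero (4 * p) := ⟨h4p⟩
  let T : Finset (ZMod (4 * p)) := Finset.univ.filter fun a =>
    IsUnit a ∧ jacobiSym p (a.val) = -1 ∧ jacobiSym (-p) (a.val) = -1
  have hmem : ∀ a, a ∈ T ↔ (IsUnit a ∧ jacobiSym p (a.val) = -1 ∧ jacobiSym (-p) (a.val) = -1) :=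
    fun a => by simp [T]
  have hne : T.Nonempty := by
    obtain ⟨a, ha⟩ := exists_class p hp
    exact ⟨a, (hmem a).mpr ha⟩
  refine ⟨T.card * ((4 * p).totient : ℝ)⁻¹, ?_, ?_⟩
  · have h1 : 0 < T.card := hne.card_pos
    have h2 : 0 < (4 * p).totient := Nat.totient_pos.mpr (Nat.pos_of_ne_zero h4p)
    positivity
  · refine (density_classes T fun a ha => ((hmem a).mp ha).1).congr fun n => ?_
    congr 2
    · symm
      refine Nat.subtype_card _ fun k => ?_
      rw [Finset.mem_filter, Finset.mem_Icc, hmem]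
      constructor
      · rintro ⟨h1, h2, h3⟩
        exact ⟨⟨h2, (jac_iff p k hp h2).mpr h3⟩, h1.2⟩
      · rintro ⟨⟨h2, h3⟩, h1⟩
        exact ⟨⟨h2.one_lt.le, h1⟩, h2, (jac_iff p k hp h2).mp h3⟩
    · symm
      rw [← Nat.primesLE_card_eq_primeCounting]
      refine Nat.subtype_card _ fun k => ?_
      rw [Nat.mem_primesLE, and_comm]
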